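/- Let ϑ₁, ϑ₂ be Beurling weights on ℝ^d and 1 ≤ p, q, r < ∞. For every f ∈ A^{p,1,q,r}_{ϑ₁,ϑ₂}(ℝ^d), the map y ↦ T_y f is continuous from ℝ^d into A^{p,1,q,r}_{ϑ₁,ϑ₂}(ℝ^d); in particular, for every ε > 0 there is a neighbourhood U of 0 in ℝ^d such that ‖T_y f − f‖_A < ε for all y ∈ U. -/

import Mathlib

open MeasureTheory Filter Topology
open scoped ENNReal NNReal BigOperators

noncomputable section

/-- The unit cube `α + [0,1)^d` at the integer point `α ∈ ℤ^d`. -/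
def cube {d : ℕ} (α : Fin d → ℤ) : Set (Fin d → ℝ) :=
  Set.univ.pi fun i => Set.Ico (α i : ℝ) ((α i : ℝ) + 1)

/-- The weighted amalgam norm `‖f‖_{pq,ω}` of the space `(L^p_ω, ℓ^q)`. -/
def amalgamNorm {d : ℕ} (p q : ℝ) (ω : (Fin d → ℝ) → ℝ) (f : (Fin d → ℝ) → ℂ) : ℝ≥0∞ :=
  (∑' α : Fin d → ℤ,
      (eLpNorm (fun x => ω x • f x) (ENNReal.ofReal p) (volume.restrict (cube α))) ^ q) ^ (1 / q)

/-- Membership in the weighted amalgam space `(L^p_ω, ℓ^q)`. -/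
def MemAmalgam {d : ℕ} (p q : ℝ) (ω : (Fin d → ℝ) → ℝ) (f : (Fin d → ℝ) → ℂ) : Prop :=
  Measurable f ∧ amalgamNorm p q ω f < ⊤

/-- A Beurling weight: measurable, `ϑ ≥ 1` and submultiplicative. -/
def IsBeurling {d : ℕ} (ϑ : (Fin d → ℝ) → ℝ) : Prop :=
  Measurable ϑ ∧ (∀ x, 1 ≤ ϑ x) ∧ ∀ x y, ϑ (x + y) ≤ ϑ x * ϑ y

/-- The Fourier transform `f̂(ξ) = ∫ f(x) e^{-2πi⟨x,ξ⟩} dx`. -/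
def fourierT {d : ℕ} (f : (Fin d → ℝ) → ℂ) (ξ : Fin d → ℝ) : ℂ :=
  ∫ x : Fin d → ℝ,
    Complex.exp (-(2 * (Real.pi : ℂ) * Complex.I * ∑ i, (x i : ℂ) * (ξ i : ℂ))) * f x

/-- The norm of `A^{p,1,q,r}_{ϑ₁,ϑ₂}(ℝ^d)`. -/
def ANorm {d : ℕ} (p q r : ℝ) (ϑ₁ ϑ₂ : (Fin d → ℝ) → ℝ) (f : (Fin d → ℝ) → ℂ) : ℝ≥0∞ :=
  amalgamNorm p 1 ϑ₁ f + amalgamNorm q r ϑ₂ (fourierT f)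

/-- Membership in `A^{p,1,q,r}_{ϑ₁,ϑ₂}(ℝ^d)`. -/
def MemA {d : ℕ} (p q r : ℝ) (ϑ₁ ϑ₂ : (Fin d → ℝ) → ℝ) (f : (Fin d → ℝ) → ℂ) : Prop :=
  MemAmalgam p 1 ϑ₁ f ∧ MemAmalgam q r ϑ₂ (fourierT f)

/-- Convolution `(f∗g)(x) = ∫ f(x−t)g(t) dt`. -/
def convF {d : ℕ} (f g : (Fin d → ℝ) → ℂ) (x : Fin d → ℝ) : ℂ :=
  ∫ t : Fin d → ℝ, f (x - t) * g t

/-- `ϑ ≺ ϑ'` : domination of weights up to a constant. -/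
def Prec {d : ℕ} (ϑ ϑ' : (Fin d → ℝ) → ℝ) : Prop :=
  ∃ C : ℝ, 0 < C ∧ ∀ x, ϑ x ≤ C * ϑ' x

/-- The Beurling–Domar condition `∑_{n≥1} log ϑ(nx)/n² < ∞`. -/
def BeurlingDomar {d : ℕ} (ϑ : (Fin d → ℝ) → ℝ) : Prop :=
  ∀ x : Fin d → ℝ, Summable fun n : ℕ => Real.log (ϑ ((n : ℝ) • x)) / (n : ℝ) ^ 2

/-- `w` does not tend to zero as `|x| → ∞`. -/
def NotVanishingAtInfty {d : ℕ} (w : (Fin d → ℝ) → ℝ) : Prop :=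
  ∃ δ : ℝ, 0 < δ ∧ ∀ R : ℝ, 0 < R → ∃ x : Fin d → ℝ, R < ‖x‖ ∧ δ ≤ w x

end

lemma tendsto_tsum_zero_dct {X ι : Type*} [Countable ι] {l : Filter X} [l.IsCountablyGenerated]
    (F : X → ι → ℝ≥0∞) (b : ι → ℝ≥0∞) (hb : ∑' i, b i ≠ ⊤)
    (hF : ∀ᶠ y in l, ∀ i, F y i ≤ b i) (h0 : ∀ i, Tendsto (fun y => F y i) l (𝓝 0)) :
    Tendsto (fun y => ∑' i, F y i) l (𝓝 0) := by
  let : MeasurableSpace ι := ⊤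
  have : MeasurableSingletonClass ι := ⟨fun _ => trivial⟩
  have := tendsto_lintegral_filter_of_dominated_convergence (μ := Measure.count) (l := l)
    (F := F) (f := fun _ => 0) b (Eventually.of_forall fun y => measurable_from_top)
    (hF.mono fun y hy => Eventually.of_forall hy) (by rwa [lintegral_count])
    (Eventually.of_forall h0)
  simpa [lintegral_count] using this

lemma mem_cube_iff {d : ℕ} {α : Fin d → ℤ} {x : Fin d → ℝ} :
    x ∈ cube α ↔ (fun i => ⌊x i⌋) = α := by
  simp [cube, funext_iff, Int.floor_eq_iff]

lemma measurableSet_cube {d : ℕ} (α : Fin d → ℤ) : MeasurableSet (cube α) :=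
  MeasurableSet.univ_pi fun _ => measurableSet_Ico

lemma volume_cube {d : ℕ} (α : Fin d → ℤ) : volume (cube α) = 1 := by
  simp [cube, volume_pi_pi]

lemma iUnion_cube {d : ℕ} : (⋃ α : Fin d → ℤ, cube α) = Set.univ := by
  ext x; simp [mem_cube_iff]

lemma disjoint_cube {d : ℕ} : Pairwise (Function.onFun Disjoint (cube (d := d))) := by
  intro α β h
  rw [Function.onFun, Set.disjoint_left]
  intro x hx hy
  exact h ((mem_cube_iff.1 hx).symm.trans (mem_cube_iff.1 hy))

lemma lintegral_eq_tsum_cube {d : ℕ} (g : (Fin d → ℝ) → ℝ≥0∞) :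
    ∫⁻ x, g x = ∑' α : Fin d → ℤ, ∫⁻ x in cube α, g x := by
  rw [← lintegral_iUnion measurableSet_cube disjoint_cube, iUnion_cube, Measure.restrict_univ]

lemma beurling_locally_bounded {d : ℕ} {ϑ : (Fin d → ℝ) → ℝ} (h : IsBeurling ϑ)
    (y₀ : Fin d → ℝ) : ∃ C : ℝ, ∀ᶠ y in 𝓝 y₀, ϑ y ≤ C := by
  obtain ⟨hm, h1, hs⟩ := h
  let E : ℕ → Set (Fin d → ℝ) := fun n => {x | ϑ x ≤ n ∧ ϑ (-x) ≤ n}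
  have hEm : ∀ n, MeasurableSet (E n) := fun n =>
    (measurableSet_le hm measurable_const).inter
      (measurableSet_le (hm.comp measurable_neg) measurable_const)
  have hU : (⋃ n, E n) = Set.univ := by
    ext x
    simp only [Set.mem_iUnion, Set.mem_univ, iff_true]
    obtain ⟨n, hn⟩ := exists_nat_ge (max (ϑ x) (ϑ (-x)))
    exact ⟨n, (le_max_left _ _).trans hn, (le_max_right _ _).trans hn⟩
  obtain ⟨n, hn⟩ : ∃ n, 0 < volume (E n) := by
    by_contra! hcon
    have : volume (⋃ n, E n) = 0 := measure_iUnion_null fun n => le_antisymm (hcon n) zero_le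
    rw [hU] at this
    exact (isOpen_univ.measure_pos (volume : Measure (Fin d → ℝ)) Set.univ_nonempty).ne' this
  have hnh := Measure.sub_mem_nhds_zero_of_addHaar_pos volume (E n) (hEm n) hn
  refine ⟨ϑ y₀ * (n * n), ?_⟩
  have ht : Tendsto (fun y => y - y₀) (𝓝 y₀) (𝓝 0) := by
    have : Continuous (fun y : Fin d → ℝ => y - y₀) := by fun_prop
    simpa using this.tendsto y₀
  filter_upwards [ht hnh] with y hy
  obtain ⟨a, ha, b, hb, hab⟩ := hy
  have hab' : y = y₀ + (a + -b) := by
    have : a - b = y - y₀ := hab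
    rw [← sub_eq_add_neg, this]; abel
  have h0 : 0 ≤ ϑ y₀ := zero_le_one.trans (h1 _)
  calc ϑ y ≤ ϑ y₀ * ϑ (a + -b) := by rw [hab']; exact hs _ _
    _ ≤ ϑ y₀ * (n * n) := by
      gcongr
      exact (hs _ _).trans (mul_le_mul ha.1 hb.2 (zero_le_one.trans (h1 _)) (by positivity))

lemma beurling_bounded_cube {d : ℕ} {ϑ : (Fin d → ℝ) → ℝ} (h : IsBeurling ϑ)
    (α : Fin d → ℤ) : ∃ C : ℝ, ∀ x ∈ cube α, ϑ x ≤ C := by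
  have hK : IsCompact (Set.univ.pi fun i => Set.Icc (α i : ℝ) ((α i : ℝ) + 1)) :=
    isCompact_univ_pi fun i => isCompact_Icc
  have : ∃ C : ℝ, ∀ x ∈ (Set.univ.pi fun i => Set.Icc (α i : ℝ) ((α i : ℝ) + 1)), ϑ x ≤ C := by
    refine hK.induction_on (p := fun s => ∃ C : ℝ, ∀ x ∈ s, ϑ x ≤ C) ⟨0, by simp⟩ ?_ ?_ ?_
    · rintro s t hst ⟨C, hC⟩
      exact ⟨C, fun x hx => hC x (hst hx)⟩
    · rintro s t ⟨C, hC⟩ ⟨D, hD⟩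
      refine ⟨max C D, ?_⟩
      rintro x (hx | hx)
      · exact (hC x hx).trans (le_max_left _ _)
      · exact (hD x hx).trans (le_max_right _ _)
    · intro x _
      obtain ⟨C, hC⟩ := beurling_locally_bounded h x
      exact ⟨{y | ϑ y ≤ C}, mem_nhdsWithin_of_mem_nhds hC, C, fun y hy => hy⟩
  obtain ⟨C, hC⟩ := this
  exact ⟨C, fun x hx => hC x fun i hi => Set.Ico_subset_Icc_self (hx i hi)⟩

lemma translation_Lp {d : ℕ} {p : ℝ≥0∞} (hp : 1 ≤ p) (hp' : p ≠ ⊤) {f : (Fin d → ℝ) → ℂ}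
    (hf : MemLp f p volume) (y₀ : Fin d → ℝ) :
    Tendsto (fun y => eLpNorm (fun x => f (x - y) - f (x - y₀)) p volume) (𝓝 y₀) (𝓝 0) := by
  have : Fact (1 ≤ p) := ⟨hp⟩
  have : Fact (p ≠ ⊤) := ⟨hp'⟩
  have hc : Continuous fun y : Fin d → ℝ => (DomAddAct.mk (-y)) +ᵥ hf.toLp f := by
    have h1 : Continuous fun y : Fin d → ℝ => DomAddAct.mk (-y) :=
      DomAddAct.continuous_mk.comp continuous_neg
    exact h1.vadd continuous_const
  have ht := tendsto_iff_edist_tendsto_0.1 (hc.tendsto y₀)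
  refine ht.congr fun y => ?_
  rw [DomAddAct.mk_vadd_toLp, DomAddAct.mk_vadd_toLp, Lp.edist_toLp_toLp]
  congr 1
  ext x
  simp [sub_eq_neg_add]

lemma memLp_of_amalgam {d : ℕ} {p s : ℝ} (hs : 1 ≤ s) (hsp : s ≤ p)
    {ϑ : (Fin d → ℝ) → ℝ} (h : IsBeurling ϑ) {f : (Fin d → ℝ) → ℂ}
    (hf : MemAmalgam p 1 ϑ f) : MemLp f (ENNReal.ofReal s) volume := by
  obtain ⟨hfm, hfin⟩ := hf
  refine ⟨hfm.aestronglyMeasurable, ?_⟩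
  have hs0 : 0 < s := by linarith
  have hs0' : ENNReal.ofReal s ≠ 0 := by simpa using hs0
  simp only [amalgamNorm, ENNReal.rpow_one, div_one] at hfin
  set a : (Fin d → ℤ) → ℝ≥0∞ := fun α =>
    eLpNorm (fun x => ϑ x • f x) (ENNReal.ofReal p) (volume.restrict (cube α)) with ha
  have hle : ∀ α, eLpNorm f (ENNReal.ofReal s) (volume.restrict (cube α)) ≤ a α := by
    intro α
    have : IsProbabilityMeasure (volume.restrict (cube α)) := ⟨by simp [volume_cube]⟩
    calc _ ≤ eLpNorm f (ENNReal.ofReal p) (volume.restrict (cube α)) :=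
          eLpNorm_le_eLpNorm_of_exponent_le (ENNReal.ofReal_le_ofReal hsp)
            hfm.aestronglyMeasurable
      _ ≤ _ := by
        refine eLpNorm_mono fun x => ?_
        rw [norm_smul, Real.norm_eq_abs]
        exact le_mul_of_one_le_left (norm_nonneg _) ((h.2.1 x).trans (le_abs_self _))
  rw [eLpNorm_lt_top_iff_lintegral_rpow_enorm_lt_top hs0' ENNReal.ofReal_ne_top,
    lintegral_eq_tsum_cube]
  have hS : ∀ α, ∫⁻ x in cube α, ‖f x‖ₑ ^ (ENNReal.ofReal s).toReal
      ≤ (∑' α, a α) ^ (s - 1) * a α := by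
    intro α
    have h1 : ∫⁻ x in cube α, ‖f x‖ₑ ^ (ENNReal.ofReal s).toReal
        = eLpNorm f (ENNReal.ofReal s) (volume.restrict (cube α)) ^ s := by
      rw [eLpNorm_eq_lintegral_rpow_enorm_toReal hs0' ENNReal.ofReal_ne_top,
        ENNReal.toReal_ofReal hs0.le, ← ENNReal.rpow_mul]
      simp [hs0.ne']
    rw [h1]
    calc _ ≤ a α ^ s := ENNReal.rpow_le_rpow (hle α) hs0.le
      _ = a α ^ (s - 1) * a α ^ (1:ℝ) := by
        rw [← ENNReal.rpow_add_of_nonneg _ _ (by linarith) zero_le_one]; congr 1; ring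
      _ ≤ _ := by
        rw [ENNReal.rpow_one]
        exact mul_le_mul_left (ENNReal.rpow_le_rpow (ENNReal.le_tsum α) (by linarith)) _
  refine (ENNReal.tsum_le_tsum hS).trans_lt ?_
  rw [ENNReal.tsum_mul_left]
  exact ENNReal.mul_lt_top (ENNReal.rpow_lt_top_of_nonneg (by linarith) hfin.ne) hfin

/-- integer shifts needed to cover a translate of a cube by a vector near `y₀` -/
noncomputable def shiftSet {d : ℕ} (y₀ : Fin d → ℝ) : Finset (Fin d → ℤ) :=
  Fintype.piFinset fun i => Finset.Icc ⌊-y₀ i - 1⌋ ⌊-y₀ i + 2⌋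

lemma translate_bound {d : ℕ} {P : ℝ≥0∞} (hP : 1 ≤ P) {ϑ : (Fin d → ℝ) → ℝ} (h : IsBeurling ϑ)
    {f : (Fin d → ℝ) → ℂ} (hf : Measurable f) (y₀ y : Fin d → ℝ) (hy : dist y y₀ < 1)
    (α : Fin d → ℤ) :
    eLpNorm (fun x => ϑ x • f (x - y)) P (volume.restrict (cube α)) ≤
      ENNReal.ofReal (ϑ y) * ∑ s ∈ shiftSet y₀,
        eLpNorm (fun x => ϑ x • f x) P (volume.restrict (cube (α + s))) := by
  obtain ⟨hm, h1, hs⟩ := h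
  have hgm : Measurable fun x => ‖ϑ x • f x‖ := (hm.smul hf).norm
  set G : (Fin d → ℝ) → ℝ :=
    ∑ s ∈ shiftSet y₀, (cube (α + s)).indicator (fun x => ‖ϑ x • f x‖) with hG
  have hGm : Measurable G := by
    have e : G = fun x => ∑ s ∈ shiftSet y₀,
        (cube (α + s)).indicator (fun x => ‖ϑ x • f x‖) x := by
      ext x; rw [hG, Finset.sum_apply]
    rw [e]
    exact Finset.measurable_sum _ fun s _ => hgm.indicator (measurableSet_cube _)
  rw [← eLpNorm_indicator_eq_eLpNorm_restrict (measurableSet_cube α)]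
  have step1 : eLpNorm ((cube α).indicator fun x => ϑ x • f (x - y)) P volume
      ≤ ENNReal.ofReal (ϑ y) * eLpNorm (fun x => G (x - y)) P volume := by
    refine eLpNorm_le_mul_eLpNorm_of_ae_le_mul (Eventually.of_forall fun x => ?_) P
    by_cases hx : x ∈ cube α
    · rw [Set.indicator_of_mem hx]
      set β : Fin d → ℤ := fun i => ⌊(x - y) i⌋ with hβ
      have hxb : x - y ∈ cube β := mem_cube_iff.2 rfl
      have hmem : β - α ∈ shiftSet y₀ := by
        rw [shiftSet, Fintype.mem_piFinset]
        intro i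
        have hxi := hx i trivial
        have hd : |y i - y₀ i| < 1 := by
          rw [← Real.dist_eq]; exact (dist_le_pi_dist y y₀ i).trans_lt hy
        rw [abs_lt] at hd
        have e : (β - α) i = ⌊(x - y) i - (α i : ℝ)⌋ := by
          rw [Int.floor_sub_intCast]; rfl
        rw [Finset.mem_Icc, e]
        simp only [Set.mem_Ico] at hxi
        constructor
        · apply Int.floor_le_floor
          simp only [Pi.sub_apply]; linarith
        · apply Int.floor_le_floor
          simp only [Pi.sub_apply]; linarith
      have hGle : ‖ϑ (x - y) • f (x - y)‖ ≤ G (x - y) := by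
        rw [hG, Finset.sum_apply]
        refine le_trans (le_of_eq ?_) (Finset.single_le_sum
          (f := fun s => (cube (α + s)).indicator (fun x => ‖ϑ x • f x‖) (x - y))
          (fun s _ => Set.indicator_nonneg (fun _ _ => norm_nonneg _) _) hmem)
        have : x - y ∈ cube (α + (β - α)) := by simpa using hxb
        simp only [Set.indicator_of_mem this]
      have hϑ : |ϑ x| ≤ ϑ y * |ϑ (x - y)| := by
        rw [abs_of_nonneg (zero_le_one.trans (h1 _)), abs_of_nonneg (zero_le_one.trans (h1 _))]
        simpa using hs y (x - y)
      have hy0 : 0 ≤ ϑ y := zero_le_one.trans (h1 _)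
      calc ‖ϑ x • f (x - y)‖ = |ϑ x| * ‖f (x - y)‖ := by rw [norm_smul, Real.norm_eq_abs]
        _ ≤ ϑ y * |ϑ (x - y)| * ‖f (x - y)‖ := by gcongr
        _ = ϑ y * ‖ϑ (x - y) • f (x - y)‖ := by rw [norm_smul, Real.norm_eq_abs]; ring
        _ ≤ ϑ y * ‖G (x - y)‖ := by
          gcongr
          exact hGle.trans (le_abs_self _)
    · rw [Set.indicator_of_notMem hx, norm_zero]
      exact mul_nonneg (zero_le_one.trans (h1 _)) (norm_nonneg _)
  refine step1.trans ?_
  gcongr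
  have e1 : eLpNorm (fun x => G (x - y)) P volume = eLpNorm G P volume :=
    eLpNorm_comp_measurePreserving hGm.aestronglyMeasurable
      (measurePreserving_sub_right volume y)
  rw [e1, hG]
  refine (eLpNorm_sum_le (fun s _ =>
    (hgm.indicator (measurableSet_cube _)).aestronglyMeasurable) hP).trans ?_
  refine Finset.sum_le_sum fun s _ => ?_
  rw [eLpNorm_indicator_eq_eLpNorm_restrict (measurableSet_cube _), eLpNorm_norm]

lemma translation_amalgam {d : ℕ} {p : ℝ} (hp : 1 ≤ p) {ϑ : (Fin d → ℝ) → ℝ} (h : IsBeurling ϑ)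
    {f : (Fin d → ℝ) → ℂ} (hf : MemAmalgam p 1 ϑ f) (y₀ : Fin d → ℝ) :
    Tendsto (fun y => amalgamNorm p 1 ϑ (fun x => f (x - y) - f (x - y₀))) (𝓝 y₀) (𝓝 0) := by
  have hP : 1 ≤ ENNReal.ofReal p := by simpa using ENNReal.ofReal_le_ofReal hp
  have hLp := memLp_of_amalgam hp le_rfl h hf
  obtain ⟨hfm, hfin⟩ := hf
  simp only [amalgamNorm, ENNReal.rpow_one, div_one] at hfin ⊢
  set a : (Fin d → ℤ) → ℝ≥0∞ := fun α =>
    eLpNorm (fun x => ϑ x • f x) (ENNReal.ofReal p) (volume.restrict (cube α)) with ha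
  obtain ⟨C, hC⟩ := beurling_locally_bounded h y₀
  refine tendsto_tsum_zero_dct _
    (fun α => 2 * (ENNReal.ofReal C * ∑ s ∈ shiftSet y₀, a (α + s))) ?_ ?_ ?_
  · rw [ENNReal.tsum_mul_left, ENNReal.tsum_mul_left, Summable.tsum_finsetSum
      (fun _ _ => ENNReal.summable)]
    have : ∀ s : Fin d → ℤ, ∑' α, a (α + s) = ∑' α, a α := fun s =>
      (Equiv.addRight s).tsum_eq a
    simp only [this, Finset.sum_const, nsmul_eq_mul]
    have := hfin.ne
    finiteness
  · filter_upwards [hC, Metric.ball_mem_nhds y₀ one_pos] with y hyC hy α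
    have hb : ∀ z, ϑ z ≤ C → dist z y₀ < 1 →
        eLpNorm (fun x => ϑ x • f (x - z)) (ENNReal.ofReal p) (volume.restrict (cube α))
          ≤ ENNReal.ofReal C * ∑ s ∈ shiftSet y₀, a (α + s) := by
      intro z hz hz'
      refine (translate_bound hP h hfm y₀ z hz' α).trans ?_
      gcongr
    have hmz : ∀ z, Measurable fun x => ϑ x • f (x - z) := fun z =>
      h.1.smul (hfm.comp (measurable_id.sub_const z))
    simp only [smul_sub]
    rw [two_mul]
    exact (eLpNorm_sub_le (hmz y).aestronglyMeasurable (hmz y₀).aestronglyMeasurable hP).trans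
      (add_le_add (hb y hyC hy) (hb y₀ hC.self_of_nhds (by simp)))
  · intro α
    obtain ⟨M, hM⟩ := beurling_bounded_cube h α
    have ht := ENNReal.Tendsto.const_mul (a := ENNReal.ofReal M)
      (translation_Lp hP ENNReal.ofReal_ne_top hLp y₀) (Or.inr ENNReal.ofReal_ne_top)
    rw [mul_zero] at ht
    refine tendsto_of_tendsto_of_tendsto_of_le_of_le tendsto_const_nhds ht
      (fun _ => zero_le) fun y => ?_
    calc _ ≤ ENNReal.ofReal M * eLpNorm (fun x => f (x - y) - f (x - y₀)) (ENNReal.ofReal p)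
          (volume.restrict (cube α)) := by
          refine eLpNorm_le_mul_eLpNorm_of_ae_le_mul ?_ _
          filter_upwards [ae_restrict_mem (measurableSet_cube α)] with x hx
          rw [norm_smul, Real.norm_eq_abs, abs_of_nonneg (zero_le_one.trans (h.2.1 _))]
          gcongr
          exact hM x hx
      _ ≤ _ := by
        exact mul_le_mul_right (eLpNorm_mono_measure _ Measure.restrict_le_self) _

/-- the character `e^{-2πi⟨x,ξ⟩}` -/
noncomputable def chr {d : ℕ} (x ξ : Fin d → ℝ) : ℂ :=
  Complex.exp (-(2 * (Real.pi : ℂ) * Complex.I * ∑ i, (x i : ℂ) * (ξ i : ℂ)))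

lemma norm_chr {d : ℕ} (x ξ : Fin d → ℝ) : ‖chr x ξ‖ = 1 := by
  have : chr x ξ = Complex.exp (((-(2 * Real.pi * ∑ i, x i * ξ i) : ℝ) : ℂ) * Complex.I) := by
    rw [chr]; congr 1; push_cast; ring
  rw [this, Complex.norm_exp_ofReal_mul_I]

lemma chr_add {d : ℕ} (x y ξ : Fin d → ℝ) : chr (x + y) ξ = chr x ξ * chr y ξ := by
  rw [chr, chr, chr, ← Complex.exp_add]; congr 1
  simp only [Pi.add_apply, Complex.ofReal_add, add_mul, Finset.sum_add_distrib]; ring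

lemma continuous_chr_left {d : ℕ} (ξ : Fin d → ℝ) : Continuous fun x => chr x ξ := by
  unfold chr; fun_prop

lemma continuous_chr_right {d : ℕ} (x : Fin d → ℝ) : Continuous fun ξ => chr x ξ := by
  unfold chr; fun_prop

lemma fourierT_translate {d : ℕ} {f : (Fin d → ℝ) → ℂ} (hf : Integrable f) (y y₀ : Fin d → ℝ) :
    fourierT (fun x => f (x - y) - f (x - y₀)) =
      fun ξ => (chr y ξ - chr y₀ ξ) * fourierT f ξ := by
  ext ξ
  have hi : ∀ z, Integrable fun x => chr x ξ * f (x - z) := fun z =>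
    (hf.comp_sub_right z).bdd_mul (c := 1) (continuous_chr_left ξ).aestronglyMeasurable
      (Eventually.of_forall fun x => (norm_chr x ξ).le)
  have ht : ∀ z, ∫ x, chr x ξ * f (x - z) = chr z ξ * fourierT f ξ := by
    intro z
    have := integral_sub_right_eq_self (μ := volume) (fun x => chr (x + z) ξ * f x) z
    simp only [sub_add_cancel] at this
    rw [this, fourierT, ← integral_const_mul]
    congr 1; ext x
    rw [chr_add, mul_comm (chr x ξ), mul_assoc]; rfl
  change ∫ x, chr x ξ * (f (x - y) - f (x - y₀)) = _
  simp only [mul_sub]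
  rw [integral_sub (hi y) (hi y₀), ht, ht]; ring

lemma modulation_amalgam {d : ℕ} {q r : ℝ} (hq : 1 ≤ q) (hr : 1 ≤ r) {ϑ : (Fin d → ℝ) → ℝ}
    (h : IsBeurling ϑ) {g : (Fin d → ℝ) → ℂ} (hg : MemAmalgam q r ϑ g) (y₀ : Fin d → ℝ) :
    Tendsto (fun y => amalgamNorm q r ϑ (fun ξ => (chr y ξ - chr y₀ ξ) * g ξ)) (𝓝 y₀) (𝓝 0) := by
  obtain ⟨hgm, hfin⟩ := hg
  have hr0 : 0 < r := by linarith
  have hq0 : 0 < q := by linarith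
  have hQ0 : ENNReal.ofReal q ≠ 0 := by simpa using hq0
  have hfin' : ∑' α : Fin d → ℤ, (eLpNorm (fun x => ϑ x • g x) (ENNReal.ofReal q)
      (volume.restrict (cube α))) ^ r < ⊤ := by
    by_contra hcon
    rw [not_lt, top_le_iff] at hcon
    rw [amalgamNorm, hcon, ENNReal.top_rpow_of_pos (by positivity)] at hfin
    exact lt_irrefl _ hfin
  have hnorm : ∀ y ξ, ‖ϑ ξ • ((chr y ξ - chr y₀ ξ) * g ξ)‖ ≤ 2 * ‖ϑ ξ • g ξ‖ := by
    intro y ξ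
    rw [norm_smul, norm_smul, norm_mul]
    have : ‖chr y ξ - chr y₀ ξ‖ ≤ 2 := by
      refine (norm_sub_le _ _).trans ?_
      rw [norm_chr, norm_chr]; norm_num
    calc _ ≤ ‖ϑ ξ‖ * (2 * ‖g ξ‖) := by gcongr
      _ = _ := by ring
  have hcube : ∀ α y, eLpNorm (fun ξ => ϑ ξ • ((chr y ξ - chr y₀ ξ) * g ξ)) (ENNReal.ofReal q)
      (volume.restrict (cube α)) ≤ ENNReal.ofReal 2 * eLpNorm (fun x => ϑ x • g x)
        (ENNReal.ofReal q) (volume.restrict (cube α)) := fun α y =>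
    eLpNorm_le_mul_eLpNorm_of_ae_le_mul (Eventually.of_forall (hnorm y)) _
  have hs : Tendsto (fun y => ∑' α : Fin d → ℤ,
      (eLpNorm (fun ξ => ϑ ξ • ((chr y ξ - chr y₀ ξ) * g ξ)) (ENNReal.ofReal q)
        (volume.restrict (cube α))) ^ r) (𝓝 y₀) (𝓝 0) := by
    refine tendsto_tsum_zero_dct _ (fun α => (ENNReal.ofReal 2) ^ r *
      (eLpNorm (fun x => ϑ x • g x) (ENNReal.ofReal q) (volume.restrict (cube α))) ^ r) ?_ ?_ ?_
    · rw [ENNReal.tsum_mul_left]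
      exact ENNReal.mul_ne_top (ENNReal.rpow_ne_top_of_nonneg hr0.le ENNReal.ofReal_ne_top)
        hfin'.ne
    · refine Eventually.of_forall fun y α => ?_
      rw [← ENNReal.mul_rpow_of_nonneg _ _ hr0.le]
      exact ENNReal.rpow_le_rpow (hcube α y) hr0.le
    · intro α
      have hα : eLpNorm (fun x => ϑ x • g x) (ENNReal.ofReal q) (volume.restrict (cube α)) ≠ ⊤ := by
        intro htop
        have := ENNReal.le_tsum (f := fun α : Fin d → ℤ => (eLpNorm (fun x => ϑ x • g x)
          (ENNReal.ofReal q) (volume.restrict (cube α))) ^ r) α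
        simp only [htop, ENNReal.top_rpow_of_pos hr0, top_le_iff] at this
        exact hfin'.ne this
      have hlin := (eLpNorm_lt_top_iff_lintegral_rpow_enorm_lt_top hQ0 ENNReal.ofReal_ne_top).1
        hα.lt_top
      rw [ENNReal.toReal_ofReal hq0.le] at hlin
      have hL : Tendsto (fun y => ∫⁻ ξ in cube α, ‖ϑ ξ • ((chr y ξ - chr y₀ ξ) * g ξ)‖ₑ ^ q)
          (𝓝 y₀) (𝓝 (∫⁻ ξ in cube α, 0)) := by
        refine tendsto_lintegral_filter_of_dominated_convergence
          (fun ξ => (ENNReal.ofReal 2) ^ q * ‖ϑ ξ • g ξ‖ₑ ^ q) ?_ ?_ ?_ ?_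
        · refine Eventually.of_forall fun y => ?_
          exact ((h.1.smul (((continuous_chr_right y).measurable.sub
            (continuous_chr_right y₀).measurable).mul hgm)).enorm).pow_const q
        · refine Eventually.of_forall fun y => Eventually.of_forall fun ξ => ?_
          rw [← ENNReal.mul_rpow_of_nonneg _ _ hq0.le]
          refine ENNReal.rpow_le_rpow ?_ hq0.le
          rw [← ofReal_norm, ← ofReal_norm, ← ENNReal.ofReal_mul zero_le_two]
          exact ENNReal.ofReal_le_ofReal (hnorm y ξ)
        · have hmm : Measurable fun ξ => ‖ϑ ξ • g ξ‖ₑ ^ q := (h.1.smul hgm).enorm.pow_const q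
          rw [lintegral_const_mul _ hmm]
          exact ENNReal.mul_ne_top (ENNReal.rpow_ne_top_of_nonneg hq0.le ENNReal.ofReal_ne_top)
            hlin.ne
        · refine Eventually.of_forall fun ξ => ?_
          have hc : Continuous fun y => ‖ϑ ξ • ((chr y ξ - chr y₀ ξ) * g ξ)‖ₑ ^ q := by
            have := continuous_chr_left ξ
            have h2 : Continuous fun y => ϑ ξ • ((chr y ξ - chr y₀ ξ) * g ξ) := by fun_prop
            exact (ENNReal.continuous_rpow_const).comp h2.enorm
          have := hc.tendsto y₀
          simpa [hq0] using this
      rw [lintegral_zero] at hL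
      have hc := ((ENNReal.continuous_rpow_const (y := r)).comp
        (ENNReal.continuous_rpow_const (y := 1 / q))).tendsto 0
      have hc' := hc.comp hL
      have e0 : ((fun x : ℝ≥0∞ => x ^ r) ∘ fun x : ℝ≥0∞ => x ^ (1 / q)) 0 = 0 := by
        simp [hr0, hq0]
      rw [e0] at hc'
      refine hc'.congr fun y => ?_
      simp only [Function.comp]
      rw [eLpNorm_eq_lintegral_rpow_enorm_toReal hQ0 ENNReal.ofReal_ne_top,
        ENNReal.toReal_ofReal hq0.le]
  have hc := (ENNReal.continuous_rpow_const (y := 1 / r)).tendsto 0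
  rw [ENNReal.zero_rpow_of_pos (by positivity)] at hc
  exact hc.comp hs

/-- the map `y ↦ T_y f` is continuous from `ℝ^d` into
`A^{p,1,q,r}_{ϑ₁,ϑ₂}(ℝ^d)`; in particular `‖T_y f − f‖_A < ε` for `y` near `0`. -/
theorem A_translation_continuous {d : ℕ} (p q r : ℝ) (hp : 1 ≤ p) (hq : 1 ≤ q) (hr : 1 ≤ r)
    (ϑ₁ ϑ₂ : (Fin d → ℝ) → ℝ) (h1 : IsBeurling ϑ₁) (h2 : IsBeurling ϑ₂)
    (f : (Fin d → ℝ) → ℂ) (hf : MemA p q r ϑ₁ ϑ₂ f) :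
    (∀ y₀ : Fin d → ℝ,
      Tendsto (fun y : Fin d → ℝ =>
          ANorm p q r ϑ₁ ϑ₂ (fun x => f (x - y) - f (x - y₀))) (nhds y₀) (nhds 0)) ∧
    (∀ ε : ℝ, 0 < ε → ∃ U ∈ nhds (0 : Fin d → ℝ), ∀ y ∈ U,
      ANorm p q r ϑ₁ ϑ₂ (fun x => f (x - y) - f x) < ENNReal.ofReal ε) := by
  have hint : Integrable f := by
    have := memLp_of_amalgam le_rfl hp h1 hf.1
    rw [ENNReal.ofReal_one] at this
    exact memLp_one_iff_integrable.1 this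
  have main : ∀ y₀ : Fin d → ℝ,
      Tendsto (fun y : Fin d → ℝ =>
          ANorm p q r ϑ₁ ϑ₂ (fun x => f (x - y) - f (x - y₀))) (nhds y₀) (nhds 0) := by
    intro y₀
    have := (translation_amalgam hp h1 hf.1 y₀).add (modulation_amalgam hq hr h2 hf.2 y₀)
    rw [add_zero] at this
    refine this.congr fun y => ?_
    rw [ANorm, fourierT_translate hint]
  refine ⟨main, fun ε hε => ?_⟩
  have h0 := (main 0).eventually (gt_mem_nhds (ENNReal.ofReal_pos.2 hε))
  refine ⟨_, h0, fun y hy => ?_⟩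
  simpa using hy
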